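/- arXiv:2506.13753 — 2 statements merged into one kernel-verified Lean document; each statement's English description precedes it below -/
import Mathlib

section
/- Let d ≥ 2, let σ be the uniform (rotation-invariant) probability measure on the unit sphere S^{d-1} ⊆ EuclideanSpace ℝ (Fin d), and let e be a fixed unit vector. Then the expected distance from e to the segment joining the origin to a uniformly random point of the sphere is ∫_{u ∈ S^{d-1}} Metric.infDist e (segment ℝ 0 u) dσ(u) = 1/2 + Γ(d/2)² / (2 · Γ((d-1)/2) · Γ((d+1)/2)), where Γ is the Gamma function. (Equivalently, the expectation equals 1/2 + α_{d-1}α_{d+1}/(2α_d²) where α_m = 2π^{m/2}/Γ(m/2) is the surface area of the unit (m-1)-sphere in ℝ^m.) -/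
open MeasureTheory

lemma aux_inv {d : ℕ} (μ : Measure (EuclideanSpace ℝ (Fin d)))
    (hinv : ∀ O : EuclideanSpace ℝ (Fin d) ≃ₗᵢ[ℝ] EuclideanSpace ℝ (Fin d),
      Measure.map O μ = μ) (F : ℝ → ℝ → ℝ) (x y : EuclideanSpace ℝ (Fin d)) (h : ‖x‖ = ‖y‖) :
    ∫ u, F ‖u‖ (inner ℝ x u) ∂μ = ∫ u, F ‖u‖ (inner ℝ y u) ∂μ := by
  have h1 := Submodule.reflection_sub h
  set O := (Submodule.span ℝ {x - y})ᗮ.reflection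
  conv_rhs => rw [← hinv O]
  have hO : MeasurableEmbedding O := O.toHomeomorph.measurableEmbedding
  rw [hO.integral_map]
  congr 1
  ext u
  rw [← h1, LinearIsometryEquiv.inner_map_map, LinearIsometryEquiv.norm_map]

noncomputable def auxH (t : ℝ) : ℝ := if 0 ≤ t then √(1 - t ^ 2) else 1

lemma aux_dist {d : ℕ} (e u : EuclideanSpace ℝ (Fin d)) (he : ‖e‖ = 1) (hu : ‖u‖ = 1) :
    Metric.infDist e (segment ℝ 0 u) = auxH (inner ℝ e u) := by
  have key : ∀ s : ℝ, dist e (s • u) ^ 2 = 1 - 2 * s * inner ℝ e u + s ^ 2 := by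
    intro s
    rw [dist_eq_norm, @norm_sub_sq_real, inner_smul_right, norm_smul, he, hu]
    simp
    ring
  have hle : inner ℝ e u ≤ 1 := by
    have := real_inner_le_norm e u
    rwa [he, hu, mul_one] at this
  have hne : (segment ℝ 0 u).Nonempty := ⟨0, left_mem_segment ℝ 0 u⟩
  have hseg : ∀ y ∈ segment ℝ 0 u, ∃ s : ℝ, 0 ≤ s ∧ s ≤ 1 ∧ y = s • u := by
    rintro y ⟨a, b, ha, hb, hab, rfl⟩
    exact ⟨b, hb, by linarith, by simp⟩
  unfold auxH
  split_ifs with ht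
  · apply le_antisymm
    · have hmem : (inner ℝ e u : ℝ) • u ∈ segment ℝ 0 u :=
        ⟨1 - inner ℝ e u, inner ℝ e u, by linarith, ht, by ring, by simp⟩
      refine (Metric.infDist_le_dist_of_mem hmem).trans ?_
      apply Real.le_sqrt_of_sq_le
      rw [key]; nlinarith
    · rw [Metric.le_infDist hne]
      intro y hy
      obtain ⟨s, h0, h1, rfl⟩ := hseg y hy
      rw [Real.sqrt_le_left dist_nonneg, key]
      nlinarith [sq_nonneg (s - inner ℝ e u)]
  · apply le_antisymm
    · refine (Metric.infDist_le_dist_of_mem (left_mem_segment ℝ 0 u)).trans ?_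
      simp [he]
    · rw [Metric.le_infDist hne]
      intro y hy
      obtain ⟨s, h0, h1, rfl⟩ := hseg y hy
      have := key s
      have h2 := dist_nonneg (x := e) (y := s • u)
      push Not at ht
      nlinarith [mul_nonneg h0 (neg_nonneg.2 ht.le), sq_nonneg s]

lemma aux_int_norm {n : ℕ} (hn : 1 ≤ n) :
    Integrable (fun x : EuclideanSpace ℝ (Fin n) => ‖x‖ * Real.exp (-‖x‖ ^ 2)) := by
  have : Nonempty (Fin n) := ⟨⟨0, hn⟩⟩
  rw [integrable_fun_norm_addHaar volume (f := fun r => r * Real.exp (-r ^ 2))]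
  have := integrableOn_rpow_mul_exp_neg_mul_sq (b := 1) one_pos (s := n) (by have : (0:ℝ) ≤ n := n.cast_nonneg
                                                                             linarith)
  refine this.congr_fun (fun y hy => ?_) measurableSet_Ioi
  obtain ⟨m, rfl⟩ : ∃ m, n = m + 1 := ⟨n - 1, by omega⟩
  simp only [finrank_euclideanSpace_fin, smul_eq_mul, Real.rpow_natCast, Nat.add_sub_cancel]
  rw [pow_succ]; ring_nf

lemma aux_gauss (k : ℕ) :
    ∫ y in Set.Ioi (0 : ℝ), y ^ k * Real.exp (-y ^ 2) = Real.Gamma (((k : ℝ) + 1) / 2) / 2 := by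
  have := integral_rpow_mul_exp_neg_rpow (p := 2) (q := k) (by norm_num)
    (by have : (0:ℝ) ≤ k := k.cast_nonneg
        linarith)
  simp only [Real.rpow_natCast, Real.rpow_ofNat] at this
  rw [this]; ring

lemma aux_ratio {n : ℕ} (hn : 1 ≤ n) :
    (∫ x : EuclideanSpace ℝ (Fin n), ‖x‖ * Real.exp (-‖x‖ ^ 2)) * Real.Gamma ((n : ℝ) / 2) =
    (∫ x : EuclideanSpace ℝ (Fin n), Real.exp (-‖x‖ ^ 2)) * Real.Gamma (((n : ℝ) + 1) / 2) := by
  have : Nonempty (Fin n) := ⟨⟨0, hn⟩⟩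
  rw [integral_fun_norm_addHaar volume (fun r => r * Real.exp (-r ^ 2)),
    integral_fun_norm_addHaar volume (fun r => Real.exp (-r ^ 2))]
  obtain ⟨m, rfl⟩ : ∃ m, n = m + 1 := ⟨n - 1, by omega⟩
  simp only [finrank_euclideanSpace_fin, smul_eq_mul, Nat.add_sub_cancel, nsmul_eq_mul,
    ← mul_assoc, ← pow_succ]
  rw [aux_gauss, aux_gauss]
  push_cast
  ring

lemma aux_split {n : ℕ} (g : ℝ → ℝ) :
    ∫ x : EuclideanSpace ℝ (Fin (n + 1)),
      g (‖x‖ ^ 2 - (x 0) ^ 2) * Real.exp (-‖x‖ ^ 2) =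
    (∫ t : ℝ, Real.exp (-t ^ 2)) *
      ∫ x : EuclideanSpace ℝ (Fin n), g (‖x‖ ^ 2) * Real.exp (-‖x‖ ^ 2) := by
  have e1 := (EuclideanSpace.volume_preserving_symm_measurableEquiv_toLp (Fin (n+1))).symm
  have e2 := (EuclideanSpace.volume_preserving_symm_measurableEquiv_toLp (Fin n)).symm
  have e3 := (volume_preserving_piFinSuccAbove (fun _ : Fin (n+1) => ℝ) 0).symm
  rw [← e1.integral_comp (MeasurableEquiv.measurableEmbedding _),
    ← e2.integral_comp (MeasurableEquiv.measurableEmbedding _),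
    ← e3.integral_comp (MeasurableEquiv.measurableEmbedding _), ← integral_prod_mul]
  congr 1
  ext p
  obtain ⟨t, v⟩ := p
  simp [EuclideanSpace.norm_sq_eq, Fin.sum_univ_succ, neg_add, Real.exp_add]
  ring

lemma aux_S {n : ℕ} (hn : 1 ≤ n)
    (σ : Measure (EuclideanSpace ℝ (Fin (n + 1)))) [IsProbabilityMeasure σ]
    (hsupp : ∀ᵐ u ∂σ, ‖u‖ = 1)
    (hinv : ∀ O : EuclideanSpace ℝ (Fin (n + 1)) ≃ₗᵢ[ℝ] EuclideanSpace ℝ (Fin (n + 1)),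
      Measure.map O σ = σ)
    (e : EuclideanSpace ℝ (Fin (n + 1))) (he : ‖e‖ = 1) :
    (∫ u, √(1 - (inner ℝ e u) ^ 2) ∂σ) *
      ∫ x : EuclideanSpace ℝ (Fin (n + 1)), ‖x‖ * Real.exp (-‖x‖ ^ 2) =
    (∫ t : ℝ, Real.exp (-t ^ 2)) *
      ∫ x : EuclideanSpace ℝ (Fin n), ‖x‖ * Real.exp (-‖x‖ ^ 2) := by
  have hint : Integrable (Function.uncurry
      fun (x u : EuclideanSpace ℝ (Fin (n + 1))) =>
        √(‖x‖ ^ 2 - (inner ℝ x u) ^ 2) * Real.exp (-‖x‖ ^ 2)) (volume.prod σ) := by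
    refine ((aux_int_norm (n := n + 1) (by omega)).comp_fst σ).mono' ?_ ?_
    · apply Continuous.aestronglyMeasurable
      unfold Function.uncurry
      fun_prop
    · refine Filter.Eventually.of_forall fun p => ?_
      simp only [Function.uncurry]
      rw [Real.norm_of_nonneg (by positivity)]
      gcongr
      rw [Real.sqrt_le_left (norm_nonneg _)]
      nlinarith [sq_nonneg (inner ℝ p.1 p.2 : ℝ)]
  have hswap := integral_integral_swap hint
  have hL : ∀ x : EuclideanSpace ℝ (Fin (n + 1)),
      ∫ u, √(‖x‖ ^ 2 - (inner ℝ x u) ^ 2) * Real.exp (-‖x‖ ^ 2) ∂σ =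
      (∫ u, √(1 - (inner ℝ e u) ^ 2) ∂σ) * (‖x‖ * Real.exp (-‖x‖ ^ 2)) := by
    intro x
    rw [aux_inv σ hinv (fun _ s => √(‖x‖ ^ 2 - s ^ 2) * Real.exp (-‖x‖ ^ 2)) x (‖x‖ • e)
      (by simp [norm_smul, he]), ← integral_mul_const]
    congr 1
    ext u
    have : ‖x‖ ^ 2 - (inner ℝ (‖x‖ • e) u) ^ 2 = ‖x‖ ^ 2 * (1 - (inner ℝ e u) ^ 2) := by
      rw [real_inner_smul_left]; ring
    rw [this, Real.sqrt_mul (sq_nonneg _), Real.sqrt_sq (norm_nonneg _)]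
    ring
  have hR : ∀ u : EuclideanSpace ℝ (Fin (n + 1)), ‖u‖ = 1 →
      ∫ x : EuclideanSpace ℝ (Fin (n + 1)),
        √(‖x‖ ^ 2 - (inner ℝ x u) ^ 2) * Real.exp (-‖x‖ ^ 2) =
      (∫ t : ℝ, Real.exp (-t ^ 2)) *
        ∫ x : EuclideanSpace ℝ (Fin n), ‖x‖ * Real.exp (-‖x‖ ^ 2) := by
    intro u hu
    have h := aux_inv (volume : Measure (EuclideanSpace ℝ (Fin (n + 1))))
      (fun O => O.measurePreserving.map_eq)
      (fun r s => √(r ^ 2 - s ^ 2) * Real.exp (-r ^ 2)) u (EuclideanSpace.single 0 1)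
      (by simp [hu])
    simp only [real_inner_comm] at h ⊢
    rw [h]
    have h2 := aux_split (n := n) Real.sqrt
    simp only [Real.sqrt_sq (norm_nonneg _)] at h2
    rw [← h2]
    congr 1
    ext x
    simp [EuclideanSpace.inner_single_left, EuclideanSpace.inner_single_right]
  simp only [hL] at hswap
  rw [integral_const_mul] at hswap
  rw [hswap, integral_congr_ae (hsupp.mono fun u hu => hR u hu)]
  simp

theorem stmt10 {d : ℕ} (hd : 2 ≤ d)
    (σ : Measure (EuclideanSpace ℝ (Fin d))) [IsProbabilityMeasure σ]
    (hsupp : σ (Metric.sphere (0 : EuclideanSpace ℝ (Fin d)) 1)ᶜ = 0)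
    (hinv : ∀ O : EuclideanSpace ℝ (Fin d) ≃ₗᵢ[ℝ] EuclideanSpace ℝ (Fin d),
      Measure.map O σ = σ)
    (e : EuclideanSpace ℝ (Fin d)) (he : ‖e‖ = 1) :
    ∫ u, Metric.infDist e (segment ℝ 0 u) ∂σ =
      1 / 2 + Real.Gamma ((d : ℝ) / 2) ^ 2 /
        (2 * Real.Gamma (((d : ℝ) - 1) / 2) * Real.Gamma (((d : ℝ) + 1) / 2)) := by
  have hs : ∀ᵐ u ∂σ, ‖u‖ = 1 := by
    have : ∀ᵐ u ∂σ, u ∈ Metric.sphere (0 : EuclideanSpace ℝ (Fin d)) 1 := hsupp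
    filter_upwards [this] with u hu
    simpa using hu
  rw [integral_congr_ae (hs.mono fun u hu => aux_dist e u he hu)]
  have hmeas : Measurable auxH := by
    unfold auxH
    exact Measurable.ite measurableSet_Ici (by fun_prop) measurable_const
  have hb : ∀ t, ‖auxH t‖ ≤ 1 := by
    intro t
    unfold auxH
    split_ifs
    · rw [Real.norm_of_nonneg (Real.sqrt_nonneg _), Real.sqrt_le_left zero_le_one]
      nlinarith [sq_nonneg t]
    · simp
  have hi : ∀ v : EuclideanSpace ℝ (Fin d), Integrable (fun u => auxH (inner ℝ v u)) σ := by
    intro v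
    refine Integrable.of_bound (hmeas.comp (by fun_prop)).aestronglyMeasurable 1
      (Filter.Eventually.of_forall fun u => hb _)
  have hsym := aux_inv σ hinv (fun _ s => auxH s) e (-e) (by simp)
  have hsum : ∫ u, auxH (inner ℝ e u) ∂σ + ∫ u, auxH (inner ℝ (-e) u) ∂σ
      = 1 + ∫ u, √(1 - (inner ℝ e u) ^ 2) ∂σ := by
    have h1 : (1:ℝ) = ∫ u, (1:ℝ) ∂σ := by simp
    have hi2 : Integrable (fun u => √(1 - (inner ℝ e u) ^ 2)) σ := by
      refine Integrable.of_bound (by fun_prop) 1 (Filter.Eventually.of_forall fun u => ?_)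
      rw [Real.norm_of_nonneg (Real.sqrt_nonneg _), Real.sqrt_le_left zero_le_one]
      nlinarith [sq_nonneg (inner ℝ e u : ℝ)]
    conv_rhs => lhs; rw [h1]
    rw [← integral_add (hi _) (hi _), ← integral_add (integrable_const _) hi2]
    congr 1
    ext u
    rw [inner_neg_left]
    generalize (inner ℝ e u : ℝ) = t
    unfold auxH
    rcases lt_trichotomy t 0 with h | h | h
    · rw [if_neg (by linarith), if_pos (by linarith)]; simp
    · subst h; simp
    · rw [if_pos (by linarith), if_neg (by linarith)]; ring
  obtain ⟨n, rfl⟩ : ∃ n, d = n + 1 := ⟨d - 1, by omega⟩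
  have hn : 1 ≤ n := by omega
  have hS := aux_S hn σ hs hinv e he
  have hr1 := aux_ratio hn
  have hr2 := aux_ratio (n := n + 1) (by omega)
  have hB := aux_split (n := n) (fun _ => 1)
  simp only [one_mul] at hB
  have hn' : (1:ℝ) ≤ n := by exact_mod_cast hn
  push_cast at hr2 ⊢
  have g1 : 0 < Real.Gamma ((n:ℝ) / 2) := Real.Gamma_pos_of_pos (by positivity)
  have g2 : 0 < Real.Gamma (((n:ℝ) + 1) / 2) := Real.Gamma_pos_of_pos (by positivity)
  have g3 : 0 < Real.Gamma (((n:ℝ) + 1 + 1) / 2) := Real.Gamma_pos_of_pos (by positivity)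
  have hBpos : 0 < ∫ x : EuclideanSpace ℝ (Fin (n + 1)), Real.exp (-‖x‖ ^ 2) := by
    have := GaussianFourier.integral_rexp_neg_mul_sq_norm (V := EuclideanSpace ℝ (Fin (n + 1)))
      (b := 1) one_pos
    simp only [neg_mul, one_mul] at this
    rw [this]; positivity
  rw [add_sub_cancel_right]
  rw [← hsym] at hsum
  set S := ∫ u, √(1 - (inner ℝ e u) ^ 2) ∂σ
  set A1 := ∫ x : EuclideanSpace ℝ (Fin (n + 1)), ‖x‖ * Real.exp (-‖x‖ ^ 2)
  set A := ∫ x : EuclideanSpace ℝ (Fin n), ‖x‖ * Real.exp (-‖x‖ ^ 2)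
  set B1 := ∫ x : EuclideanSpace ℝ (Fin (n + 1)), Real.exp (-‖x‖ ^ 2)
  set B := ∫ x : EuclideanSpace ℝ (Fin n), Real.exp (-‖x‖ ^ 2)
  set c := ∫ t : ℝ, Real.exp (-t ^ 2)
  set G1 := Real.Gamma ((n:ℝ) / 2)
  set G2 := Real.Gamma (((n:ℝ) + 1) / 2)
  set G3 := Real.Gamma (((n:ℝ) + 1 + 1) / 2)
  have hfin : S * (G1 * G3) = G2 ^ 2 := by
    apply mul_left_cancel₀ hBpos.ne'
    linear_combination (-S * G1) * hr2 + G1 * G2 * hS + c * G2 * hr1 - G2 ^ 2 * hB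
  have hS' : S = G2 ^ 2 / (G1 * G3) := by
    rw [eq_div_iff (by positivity)]; exact hfin
  have : G2 ^ 2 / (2 * G1 * G3) = S / 2 := by
    rw [hS']; field_simp
  rw [this]; linarith
end

section
/- Let d ≥ 1, let r > 0, let I be a finite index set, and for each i ∈ I let a_i, b_i ∈ EuclideanSpace ℝ (Fin d). Then the Lebesgue volume of the closed r-neighborhood of the union of the segments satisfies volume( Metric.cthickening r (⋃_{i ∈ I} segment ℝ (a_i) (b_i)) ) ≤ Σ_{i ∈ I} ENNReal.ofReal( ω_d · r^d + ‖b_i - a_i‖ · ω_{d-1} · r^{d-1} ), where ω_m = π^{m/2} / Γ(m/2 + 1) is the volume of the m-dimensional unit ball (ω_0 = 1). -/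
/-- `ω_m = π^(m/2) / Γ(m/2 + 1)`, the Lebesgue volume of the unit ball of `ℝ^m`. -/
noncomputable def unitBallVol (m : ℕ) : ℝ :=
  Real.pi ^ ((m : ℝ) / 2) / Real.Gamma ((m : ℝ) / 2 + 1)

open MeasureTheory in
lemma aux_ball (m : ℕ) (r : ℝ) (hr : 0 < r) :
    volume (Metric.closedBall (0 : EuclideanSpace ℝ (Fin m)) r)
      = ENNReal.ofReal (unitBallVol m * r ^ m) := by
  rcases Nat.eq_zero_or_pos m with rfl | hm
  · rw [volume_euclideanSpace_eq_dirac]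
    have : (0 : EuclideanSpace ℝ (Fin 0)) ∈ Metric.closedBall 0 r := by simp [hr.le]
    rw [Measure.dirac_apply_of_mem this]
    simp [unitBallVol]
  · haveI : Nonempty (Fin m) := ⟨⟨0, hm⟩⟩
    rw [EuclideanSpace.volume_closedBall, mul_comm, ← ENNReal.ofReal_pow hr.le,
      ← ENNReal.ofReal_mul' (by positivity)]
    rw [Fintype.card_fin]
    congr 2
    rw [unitBallVol, Real.sqrt_eq_rpow, ← Real.rpow_natCast,
      ← Real.rpow_mul Real.pi_pos.le]
    congr 2
    ring

lemma aux_omega_nonneg (m : ℕ) : 0 ≤ unitBallVol m := by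
  unfold unitBallVol
  have := Real.Gamma_pos_of_pos (s := (m : ℝ) / 2 + 1) (by positivity)
  positivity

open MeasureTheory in
lemma aux_cyl (n : ℕ) (r : ℝ) (hr : 0 < r) (L : ℝ) (hL : 0 ≤ L)
    (u : EuclideanSpace ℝ (Fin (n + 1))) (hu : ‖u‖ = 1) :
    volume {x : EuclideanSpace ℝ (Fin (n + 1)) |
        0 ≤ inner ℝ u x ∧ inner ℝ u x ≤ L ∧ ‖x‖ ^ 2 - (inner ℝ u x) ^ 2 ≤ r ^ 2}
      = ENNReal.ofReal (L * unitBallVol n * r ^ n) := by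
  have ho : Orthonormal ℝ (({0} : Set (Fin (n + 1))).domRestrict (fun _ => u)) := by
    rw [orthonormal_iff_ite]
    rintro ⟨i, hi⟩ ⟨j, hj⟩
    simp only [Set.mem_singleton_iff] at hi hj
    subst hi hj
    simp [Set.domRestrict, hu]
  obtain ⟨b, hb⟩ := ho.exists_orthonormalBasis_extension_of_card_eq (by simp)
  have hb0 : b 0 = u := hb 0 rfl
  have h1 := ((volume_preserving_piFinSuccAbove (fun _ : Fin (n + 1) => ℝ) 0).comp
    (PiLp.volume_preserving_ofLp (Fin (n + 1)))).comp b.measurePreserving_repr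
  have h2 : MeasurePreserving (Prod.map (id : ℝ → ℝ) (@WithLp.toLp 2 (Fin n → ℝ)))
      (volume.prod volume) (volume.prod volume) :=
    (MeasurePreserving.id volume).prod (PiLp.volume_preserving_toLp (Fin n))
  have h3 := MeasurePreserving.comp h2 h1
  have hms : MeasurableSet (Set.Icc (0 : ℝ) L ×ˢ
      Metric.closedBall (0 : EuclideanSpace ℝ (Fin n)) r) :=
    measurableSet_Icc.prod Metric.isClosed_closedBall.measurableSet
  have h4 := h3.measure_preimage hms.nullMeasurableSet
  rw [Measure.prod_prod, aux_ball n r hr, Real.volume_Icc, sub_zero,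
    ← ENNReal.ofReal_mul hL, ← mul_assoc] at h4
  rw [← h4]
  congr 1
  ext x
  have e0 : b.repr x 0 = inner ℝ u x := by rw [b.repr_apply_apply, hb0]
  have en : ‖x‖ ^ 2 = (inner ℝ u x) ^ 2 + ∑ i : Fin n, (b.repr x i.succ) ^ 2 := by
    rw [← b.repr.norm_map x, EuclideanSpace.real_norm_sq_eq, Fin.sum_univ_succ, e0]
  simp only [Set.mem_setOf_eq, Set.mem_preimage, Set.mem_prod, Set.mem_Icc, mem_closedBall_zero_iff,
    Function.comp, Prod.map, id]
  rw [en, ← sq_le_sq₀ (norm_nonneg _) hr.le, EuclideanSpace.real_norm_sq_eq, and_assoc]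
  simp [MeasurableEquiv.piFinSuccAbove, Fin.insertNthEquiv, e0, Fin.removeNth, Fin.tail]

open MeasureTheory in
lemma aux_seg (n : ℕ) (r : ℝ) (hr : 0 < r) (a b : EuclideanSpace ℝ (Fin (n + 1))) :
    volume (Metric.cthickening r (segment ℝ a b)) ≤ ENNReal.ofReal
        (unitBallVol (n + 1) * r ^ (n + 1) + ‖b - a‖ * unitBallVol n * r ^ n) := by
  obtain ⟨u, hu, hv⟩ : ∃ u : EuclideanSpace ℝ (Fin (n + 1)), ‖u‖ = 1 ∧ b - a = ‖b - a‖ • u := by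
    by_cases h : b - a = 0
    · exact ⟨EuclideanSpace.single 0 1, by simp, by simp [h]⟩
    · refine ⟨‖b - a‖⁻¹ • (b - a), ?_, ?_⟩
      · rw [norm_smul, norm_inv, norm_norm, inv_mul_cancel₀ (norm_ne_zero_iff.2 h)]
      · rw [smul_smul, mul_inv_cancel₀ (norm_ne_zero_iff.2 h), one_smul]
  have hL : 0 ≤ ‖b - a‖ := norm_nonneg _
  generalize ‖b - a‖ = L at hv hL
  obtain rfl : b = a + L • u := by rw [← hv]; abel
  set H : Set (EuclideanSpace ℝ (Fin (n + 1))) := {x | inner ℝ u x < 0} with hH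
  set B : Set (EuclideanSpace ℝ (Fin (n + 1))) := Metric.closedBall 0 r with hB
  set M := {x : EuclideanSpace ℝ (Fin (n + 1)) |
        0 ≤ inner ℝ u x ∧ inner ℝ u x ≤ L ∧ ‖x‖ ^ 2 - (inner ℝ u x) ^ 2 ≤ r ^ 2} with hM
  have hHm : MeasurableSet H :=
    (isOpen_lt (by fun_prop) continuous_const).measurableSet
  have hsub : Metric.cthickening r (segment ℝ a (a + L • u)) ⊆
      ((fun x => x - a) ⁻¹' (B ∩ H) ∪ (fun x => x - (a + L • u)) ⁻¹' (B \ H))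
        ∪ (fun x => x - a) ⁻¹' M := by
    have hc : IsCompact (segment ℝ a (a + L • u)) := by
      rw [segment_eq_image']
      exact isCompact_Icc.image (by fun_prop)
    rw [hc.cthickening_eq_biUnion_closedBall hr.le, segment_eq_image']
    intro x hx
    simp only [Set.mem_iUnion, Set.mem_image, exists_prop] at hx
    obtain ⟨_, ⟨t, ⟨ht0, ht1⟩, rfl⟩, hx⟩ := hx
    rw [mem_closedBall_iff_norm, add_sub_cancel_left, ← sub_sub] at hx
    simp only [Set.mem_union, Set.mem_preimage, Set.mem_inter_iff, Set.mem_diff, hB, hH, hM,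
      mem_closedBall_zero_iff, Set.mem_setOf_eq, ← sub_sub]
    generalize x - a = y at *
    have key : ∀ c : ℝ, ‖y - c • u‖ ^ 2 = ‖y‖ ^ 2 - 2 * c * inner ℝ u y + c ^ 2 := by
      intro c
      rw [norm_sub_sq_real, inner_smul_right, norm_smul, hu, real_inner_comm]
      simp only [mul_one, Real.norm_eq_abs, sq_abs]
      ring
    have iu : inner ℝ u (y - L • u) = inner ℝ u y - L := by
      rw [inner_sub_right, inner_smul_right, real_inner_self_eq_norm_sq, hu]; ring
    rw [smul_smul, ← sq_le_sq₀ (norm_nonneg _) hr.le, key] at hx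
    rw [← sq_le_sq₀ (norm_nonneg (y - L • u)) hr.le, ← sq_le_sq₀ (norm_nonneg y) hr.le, key, iu]
    generalize inner ℝ u y = s at *
    have htL : 0 ≤ t * L := by positivity
    rcases lt_or_ge s 0 with h | h
    · left; left
      refine ⟨?_, h⟩
      nlinarith [mul_nonneg htL (neg_nonneg.2 h.le), sq_nonneg (t * L)]
    rcases le_or_gt L s with h' | h'
    · left; right
      refine ⟨?_, by linarith⟩
      have : 0 ≤ L * (1 - t) * (2 * s - L * (1 + t)) := by
        refine mul_nonneg (mul_nonneg hL (by linarith)) ?_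
        nlinarith
      nlinarith
    · right
      refine ⟨h, h'.le, ?_⟩
      nlinarith [sq_nonneg (s - t * L)]
  refine (measure_mono hsub).trans ((measure_union_le _ _).trans ?_)
  have hω := aux_omega_nonneg
  have hs : ∀ (c : EuclideanSpace ℝ (Fin (n + 1))) (S : Set (EuclideanSpace ℝ (Fin (n + 1)))),
      volume ((fun x => x - c) ⁻¹' S) = volume S := by
    intro c S
    simp only [sub_eq_add_neg]
    exact measure_preimage_add_right _ _ _
  rw [ENNReal.ofReal_add (mul_nonneg (hω _) (by positivity))
    (mul_nonneg (mul_nonneg hL (hω _)) (by positivity))]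
  refine add_le_add ((measure_union_le _ _).trans ?_) ?_
  · rw [hs, hs, measure_inter_add_diff _ hHm,
      aux_ball _ r hr]
  · rw [hs, aux_cyl n r hr L hL u hu]

/-- The volume of the closed `r`-neighborhood of a finite union of segments is at most
the sum, over the segments, of the volume of a radius-`r` ball plus that of a
radius-`r` cylinder around the segment. -/
theorem stmt14 {d : ℕ} (hd : 1 ≤ d) (r : ℝ) (hr : 0 < r)
    {ι : Type*} (I : Finset ι) (a b : ι → EuclideanSpace ℝ (Fin d)) :
    MeasureTheory.volume
        (Metric.cthickening r (⋃ i ∈ I, segment ℝ (a i) (b i))) ≤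
      ∑ i ∈ I, ENNReal.ofReal
        (unitBallVol d * r ^ d + ‖b i - a i‖ * unitBallVol (d - 1) * r ^ (d - 1)) := by
  obtain ⟨n, rfl⟩ : ∃ n, d = n + 1 := ⟨d - 1, by omega⟩
  classical
  have : Metric.cthickening r (⋃ i ∈ I, segment ℝ (a i) (b i)) =
      ⋃ i ∈ I, Metric.cthickening r (segment ℝ (a i) (b i)) := by
    induction I using Finset.induction_on with
    | empty => simp
    | insert i s _ ih =>
      rw [Finset.set_biUnion_insert, Finset.set_biUnion_insert, Metric.cthickening_union, ih]
  rw [this]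
  refine (MeasureTheory.measure_biUnion_finset_le _ _).trans (Finset.sum_le_sum fun i _ => ?_)
  exact aux_seg n r hr _ _
end
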